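/- arXiv:math/0609794 — 2 statements merged into one kernel-verified Lean document; each statement's English description precedes it below -/
import Mathlib

section
/- Let (X,T) be a distal and transitive topological dynamical system (hence minimal). Then the doubly regionally proximal relation RP² on X is a closed equivalence relation, and moreover RP² coincides with the strongly doubly regionally proximal relation RP²ₛ. -/
open Filter Topology

/-- The `n`-th iterate (`n : ℤ`) of a homeomorphism `T : X → X`. -/
def iterZ {X : Type*} [TopologicalSpace X] (T : X ≃ₜ X) (n : ℤ) : X → X :=
  fun x => (T.toEquiv ^ n) x

section Defs

variable {X : Type*} [TopologicalSpace X]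

/-- The set of parallelograms `𝒫`: the closure in `X⁴` of
`{(x, Tᵐx, Tⁿx, Tᵐ⁺ⁿx) : x ∈ X, m, n ∈ ℤ}`. -/
def Para (T : X ≃ₜ X) : Set (X × X × X × X) :=
  closure {q | ∃ (x : X) (m n : ℤ),
    q = (x, iterZ T m x, iterZ T n x, iterZ T (m + n) x)}

/-- The set of parallelepipeds `𝒬`: the closure in `X⁸ = X⁴ × X⁴` of
`{(x, Tᵐx, Tⁿx, Tᵐ⁺ⁿx, Tᵖx, Tᵐ⁺ᵖx, Tⁿ⁺ᵖx, Tᵐ⁺ⁿ⁺ᵖx) : x ∈ X, m, n, p ∈ ℤ}`. -/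
def Pip (T : X ≃ₜ X) : Set ((X × X × X × X) × (X × X × X × X)) :=
  closure {q | ∃ (x : X) (m n p : ℤ),
    q = ((x, iterZ T m x, iterZ T n x, iterZ T (m + n) x),
         (iterZ T p x, iterZ T (m + p) x, iterZ T (n + p) x, iterZ T (m + n + p) x))}

end Defs

section MetricDefs

variable {X : Type*} [MetricSpace X]

/-- `(X, T)` is transitive: some point has dense orbit `{Tⁿx : n ∈ ℤ}`. -/
def IsTransitive (T : X ≃ₜ X) : Prop :=
  ∃ x : X, Dense (Set.range fun n : ℤ => iterZ T n x)

/-- `(X, T)` is minimal: every point has dense orbit. -/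
def IsMinimal (T : X ≃ₜ X) : Prop :=
  ∀ x : X, Dense (Set.range fun n : ℤ => iterZ T n x)

/-- `(x, y)` is a proximal pair: `inf_{n ∈ ℤ} d(Tⁿx, Tⁿy) = 0`. -/
def ProximalPair (T : X ≃ₜ X) (x y : X) : Prop :=
  ⨅ n : ℤ, dist (iterZ T n x) (iterZ T n y) = 0

/-- `(X, T)` is distal: every pair of distinct points is distal,
i.e. `inf_{n ∈ ℤ} d(Tⁿx, Tⁿy) > 0`. -/
def IsDistal (T : X ≃ₜ X) : Prop :=
  ∀ x y : X, x ≠ y → 0 < ⨅ n : ℤ, dist (iterZ T n x) (iterZ T n y)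

/-- The regionally proximal relation `RP`. -/
def RP (T : X ≃ₜ X) (x y : X) : Prop :=
  ∀ ε > 0, ∃ x' y' : X, ∃ n : ℤ,
    dist x' x < ε ∧ dist y' y < ε ∧ dist (iterZ T n x') (iterZ T n y') < ε

/-- The doubly regionally proximal relation `RP²`. -/
def RP2 (T : X ≃ₜ X) (x y : X) : Prop :=
  ∀ ε > 0, ∃ x' y' : X, ∃ m n : ℤ,
    dist x' x < ε ∧ dist y' y < ε ∧
    dist (iterZ T m x') (iterZ T m y') < ε ∧
    dist (iterZ T n x') (iterZ T n y') < ε ∧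
    dist (iterZ T (m + n) x') (iterZ T (m + n) y') < ε

/-- The strongly doubly regionally proximal relation `RP²ₛ`. -/
def RP2S (T : X ≃ₜ X) (x y : X) : Prop :=
  ∀ ε > 0, ∃ x' y' : X, ∃ m n : ℤ,
    dist x' x < ε ∧ dist y' y < ε ∧
    dist (iterZ T m x') y < ε ∧ dist (iterZ T n x') y < ε ∧
    dist (iterZ T (m + n) x') y < ε ∧
    dist (iterZ T m y') y < ε ∧ dist (iterZ T n y') y < ε ∧
    dist (iterZ T (m + n) y') y < ε

end MetricDefs

section Aux

set_option linter.unusedSectionVars false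

theorem iterZ_add {X : Type*} [TopologicalSpace X] (T : X ≃ₜ X) (m n : ℤ) (x : X) :
    iterZ T (m + n) x = iterZ T m (iterZ T n x) := by
  simp [iterZ, zpow_add]

theorem iterZ_zero {X : Type*} [TopologicalSpace X] (T : X ≃ₜ X) (x : X) :
    iterZ T 0 x = x := by
  simp [iterZ]

theorem iterZ_cont {X : Type*} [TopologicalSpace X] (T : X ≃ₜ X) (n : ℤ) :
    Continuous (iterZ T n) := by
  have h1 : iterZ T 1 = T := by ext x; simp [iterZ]
  have h2 : iterZ T (-1) = T.symm := by ext x; simp [iterZ]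
  induction n using Int.induction_on with
  | zero =>
    have : iterZ T 0 = id := by ext x; simp [iterZ_zero]
    rw [this]; exact continuous_id
  | succ i ih =>
    have : iterZ T ((i : ℤ) + 1) = iterZ T i ∘ T := by
      ext x; rw [iterZ_add, h1]; rfl
    rw [this]; exact ih.comp T.continuous
  | pred i ih =>
    have : iterZ T (-(i : ℤ) - 1) = iterZ T (-(i : ℤ)) ∘ T.symm := by
      ext x; rw [sub_eq_add_neg, iterZ_add, h2]; rfl
    rw [this]; exact ih.comp T.symm.continuous

variable {X : Type*} [MetricSpace X] {ι A : Type*} [AddCommGroup A]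

/-- Coordinatewise action on `ι → X`. -/
def actA (T : X ≃ₜ X) (φ : ι → A →+ ℤ) (g : A) (y : ι → X) : ι → X :=
  fun i => iterZ T (φ i g) (y i)

/-- `z` is in the orbit closure of `y`. -/
def OC (T : X ≃ₜ X) (φ : ι → A →+ ℤ) (y z : ι → X) : Prop :=
  z ∈ closure (Set.range fun g => actA T φ g y)

theorem actA_add (T : X ≃ₜ X) (φ : ι → A →+ ℤ) (g h : A) (y : ι → X) :
    actA T φ (g + h) y = actA T φ g (actA T φ h y) := by
  ext i; simp [actA, iterZ_add]

theorem actA_zero (T : X ≃ₜ X) (φ : ι → A →+ ℤ) (y : ι → X) :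
    actA T φ 0 y = y := by
  ext i; simp [actA, iterZ_zero]

theorem actA_cont (T : X ≃ₜ X) (φ : ι → A →+ ℤ) (g : A) : Continuous (actA T φ g) :=
  continuous_pi fun i => (iterZ_cont T _).comp (continuous_apply i)

theorem OC_act {T : X ≃ₜ X} {φ : ι → A →+ ℤ} {y z : ι → X} (g : A) (h : OC T φ y z) :
    OC T φ y (actA T φ g z) := by
  refine map_mem_closure (actA_cont T φ g) h ?_
  rintro _ ⟨k, rfl⟩
  exact ⟨g + k, actA_add T φ g k y⟩

theorem OC_refl (T : X ≃ₜ X) (φ : ι → A →+ ℤ) (y : ι → X) : OC T φ y y :=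
  subset_closure ⟨0, actA_zero T φ y⟩

theorem OC_trans {T : X ≃ₜ X} {φ : ι → A →+ ℤ} {y z w : ι → X} (h : OC T φ y z)
    (h' : OC T φ z w) : OC T φ y w := by
  refine closure_minimal ?_ isClosed_closure h'
  rintro _ ⟨k, rfl⟩
  exact OC_act k h

theorem OC_symm [CompactSpace X] {T : X ≃ₜ X} (hd : IsDistal T) {φ : ι → A →+ ℤ} {y z : ι → X}
    (h : OC T φ y z) : OC T φ z y := by
  let Y := ι → X
  let E : Set (Y → Y) := closure (Set.range fun g => actA T φ g)
  have hE1 : ∀ f ∈ E, ∀ w, OC T φ w (f w) := by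
    intro f hf w
    refine map_mem_closure (f := fun f : Y → Y => f w) (continuous_apply w) hf ?_
    rintro _ ⟨k, rfl⟩
    exact ⟨k, rfl⟩
  have hE2 : ∀ f ∈ E, ∀ k ∈ E, f ∘ k ∈ E := by
    intro f hf k hk
    have hc : Continuous (fun f : Y → Y => f ∘ k) :=
      continuous_pi fun w => continuous_apply (k w)
    have : f ∘ k ∈ closure E := by
      refine map_mem_closure (f := fun f : Y → Y => f ∘ k) hc hf ?_
      rintro _ ⟨g, rfl⟩
      have hc' : Continuous (fun k : Y → Y => actA T φ g ∘ k) :=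
        continuous_pi fun w => (actA_cont T φ g).comp (continuous_apply w)
      refine map_mem_closure (f := fun k : Y → Y => actA T φ g ∘ k) hc' hk ?_
      rintro _ ⟨l, rfl⟩
      exact ⟨g + l, funext fun w => actA_add T φ g l w⟩
    simpa [E] using this
  let I : Set (Y → Y) := {f | f ∈ E ∧ OC T φ z (f y)}
  have hIc : IsClosed I :=
    isClosed_closure.inter (isClosed_closure.preimage (continuous_apply y))
  have hIn : I.Nonempty := by
    have hcl : IsClosed ((fun f : Y → Y => f y) '' E) :=
      (isClosed_closure.isCompact.image (continuous_apply y)).isClosed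
    have : z ∈ (fun f : Y → Y => f y) '' E := by
      refine closure_minimal ?_ hcl h
      rintro _ ⟨k, rfl⟩
      exact ⟨_, subset_closure ⟨k, rfl⟩, rfl⟩
    obtain ⟨f, hf, hfz⟩ := this
    refine ⟨f, hf, ?_⟩
    have : f y = z := hfz
    rw [this]; exact OC_refl T φ z
  let _ : Semigroup (Y → Y) := { mul := fun f g => f ∘ g, mul_assoc := fun _ _ _ => rfl }
  obtain ⟨u, ⟨huE, hu⟩, huu⟩ := exists_idempotent_in_compact_subsemigroup (M := Y → Y)
    (fun r => continuous_pi fun w => continuous_apply (r w)) I hIn hIc.isCompact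
    (fun f hf k hk => ⟨hE2 f hf.1 k hk.1, OC_trans hk.2 (hE1 f hf.1 (k y))⟩)
  have huw : ∀ w, u (u w) = u w := fun w => congrFun huu w
  have : u y = y := by
    ext i
    by_contra hne
    have hpos := hd _ _ hne
    set c := ⨅ n : ℤ, dist (iterZ T n (u y i)) (iterZ T n (y i)) with hcdef
    have hcl : IsClosed {f : Y → Y | c ≤ dist (f (u y) i) (f y i)} :=
      isClosed_le continuous_const
        (((continuous_apply i).comp (continuous_apply (u y))).dist
          ((continuous_apply i).comp (continuous_apply y)))
    have : c ≤ dist (u (u y) i) (u y i) := by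
      refine closure_minimal ?_ hcl huE
      rintro _ ⟨k, rfl⟩
      exact ciInf_le (f := fun n : ℤ => dist (iterZ T n (u y i)) (iterZ T n (y i)))
        ⟨0, by rintro _ ⟨n, rfl⟩; exact dist_nonneg⟩ (φ i k)
    rw [huw, dist_self] at this
    linarith
  rwa [this] at hu

theorem OC_iff_ultra {T : X ≃ₜ X} {φ : ι → A →+ ℤ} {y z : ι → X} :
    OC T φ y z ↔ ∃ U : Ultrafilter A, ∀ i, Tendsto (fun g => iterZ T (φ i g) (y i)) U (𝓝 (z i)) := by
  constructor
  · intro h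
    have : NeBot (comap (fun g => actA T φ g y) (𝓝 z)) := by
      rw [comap_neBot_iff]
      intro t ht
      obtain ⟨_, h1, ⟨g, rfl⟩⟩ := mem_closure_iff_nhds.1 h t ht
      exact ⟨g, h1⟩
    refine ⟨Ultrafilter.of (comap (fun g => actA T φ g y) (𝓝 z)), fun i => ?_⟩
    have := (tendsto_comap (f := fun g => actA T φ g y) (x := 𝓝 z)).mono_left (Ultrafilter.of_le _)
    exact (tendsto_pi_nhds.1 this) i
  · rintro ⟨U, hU⟩
    exact mem_closure_of_tendsto (f := fun g => actA T φ g y) (b := (U : Filter A))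
      (tendsto_pi_nhds.2 hU) (Eventually.of_forall fun g => ⟨g, rfl⟩)

theorem OC_reindex {ι' A' : Type*} [AddCommGroup A'] {T : X ≃ₜ X} {φ : ι → A →+ ℤ}
    {φ' : ι' → A' →+ ℤ} (σ : ι' → ι) (τ : A → A') (hστ : ∀ i g, φ' i (τ g) = φ (σ i) g)
    {y z : ι → X} (h : OC T φ y z) : OC T φ' (y ∘ σ) (z ∘ σ) := by
  rw [OC_iff_ultra] at h ⊢
  obtain ⟨U, hU⟩ := h
  refine ⟨U.map τ, fun i => ?_⟩
  rw [Ultrafilter.coe_map, tendsto_map'_iff]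
  refine (hU (σ i)).congr fun g => ?_
  simp [hστ]

/-- The weights of the cube action. -/
def cw (i : Bool × Bool × Bool) : (ℤ × ℤ × ℤ × ℤ) →+ ℤ :=
  AddMonoidHom.mk' (fun g => g.1 + (if i.1 then g.2.1 else 0) + (if i.2.1 then g.2.2.1 else 0)
    + (if i.2.2 then g.2.2.2 else 0)) (by
      intro a b
      rcases i with ⟨i, j, k⟩
      cases i <;> cases j <;> cases k <;> simp <;> ring)

theorem cw_apply (i j k : Bool) (t m n p : ℤ) : cw (i, j, k) (t, m, n, p) =
    t + (if i then m else 0) + (if j then n else 0) + (if k then p else 0) := rfl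

/-- Build a cube of points. -/
def mkC {X : Type*} (a b c d e f g h : X) : Bool × Bool × Bool → X
  | (false, false, false) => a
  | (true, false, false) => b
  | (false, true, false) => c
  | (true, true, false) => d
  | (false, false, true) => e
  | (true, false, true) => f
  | (false, true, true) => g
  | (true, true, true) => h

/-- The set of cubes. -/
def QQ (T : X ≃ₜ X) (z : Bool × Bool × Bool → X) : Prop :=
  ∃ x, OC T cw (fun _ => x) z

variable [CompactSpace X] {T : X ≃ₜ X}

theorem OC_const (hd : IsDistal T) (ht : IsTransitive T) (x y : X) :
    OC T cw (fun _ => x) (fun _ => y) := by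
  obtain ⟨x0, hx0⟩ := ht
  have key : ∀ y, OC T cw (fun _ => x0) (fun _ => y) := by
    intro y
    refine map_mem_closure (f := fun (y : X) (_ : Bool × Bool × Bool) => y)
      (continuous_pi fun _ => continuous_id) (hx0 y) ?_
    rintro _ ⟨k, rfl⟩
    refine ⟨(k, 0, 0, 0), ?_⟩
    ext ⟨i, j, l⟩
    simp [actA, cw_apply]
  exact OC_trans (OC_symm hd (key x)) (key y)

theorem QQ_iff (hd : IsDistal T) (ht : IsTransitive T) (x : X) (z : Bool × Bool × Bool → X) :
    QQ T z ↔ OC T cw (fun _ => x) z :=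
  ⟨fun ⟨x', h⟩ => OC_trans (OC_const hd ht x x') h, fun h => ⟨x, h⟩⟩

theorem dense_orbit (hd : IsDistal T) (ht : IsTransitive T) (x y : X) :
    y ∈ closure (Set.range fun n : ℤ => iterZ T n x) := by
  refine map_mem_closure (continuous_apply (false, false, false)) (OC_const hd ht x y) ?_
  rintro _ ⟨⟨k, _, _, _⟩, rfl⟩
  refine ⟨k, ?_⟩
  simp [actA, cw_apply]

theorem QQ_reindex {z : Bool × Bool × Bool → X} (σ : Bool × Bool × Bool → Bool × Bool × Bool)
    (τ : ℤ × ℤ × ℤ × ℤ → ℤ × ℤ × ℤ × ℤ) (h : ∀ i g, cw i (τ g) = cw (σ i) g)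
    (hz : QQ T z) : QQ T (z ∘ σ) := by
  obtain ⟨x, hx⟩ := hz
  exact ⟨x, OC_reindex σ τ h hx⟩

/-- Gluing in the third direction. -/
theorem QQ_glue (hd : IsDistal T) (ht : IsTransitive T) {a b c d e f g h a' b' c' d' : X}
    (h1 : QQ T (mkC a b c d e f g h)) (h2 : QQ T (mkC e f g h a' b' c' d')) :
    QQ T (mkC a b c d a' b' c' d') := by
  rw [QQ_iff hd ht a] at h1
  have h1' := OC_symm hd h1
  obtain ⟨U, hU⟩ := OC_iff_ultra.1 h1'
  have hlim : ∀ i j, ∃ w, Tendsto (fun s => iterZ T (cw (i, j, true) s)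
      (mkC a b c d a' b' c' d' (i, j, true))) U (𝓝 w) := by
    intro i j
    obtain ⟨w, -, hw⟩ := isCompact_univ.ultrafilter_le_nhds
      (U.map (fun s => iterZ T (cw (i, j, true) s) (mkC a b c d a' b' c' d' (i, j, true))))
      (by simp)
    exact ⟨w, hw⟩
  choose w hw using hlim
  let z : Bool × Bool × Bool → X := fun i => if i.2.2 then w i.1 i.2.1 else a
  have hz1 : OC T cw (mkC a b c d a' b' c' d') z := by
    rw [OC_iff_ultra]
    refine ⟨U, ?_⟩
    rintro ⟨i, j, k⟩
    cases k
    · have := hU (i, j, false)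
      cases i <;> cases j <;> simpa [mkC, z] using this
    · simpa [z] using hw i j
  have hz2 : OC T cw (mkC e f g h a' b' c' d') z := by
    rw [OC_iff_ultra]
    refine ⟨U.map (fun s => (s.1 + s.2.2.2, s.2.1, s.2.2.1, 0)), ?_⟩
    rintro ⟨i, j, k⟩
    rw [Ultrafilter.coe_map, tendsto_map'_iff]
    cases k
    · refine Tendsto.congr (fun s => ?_) (by simpa [z] using hU (i, j, true))
      rcases s with ⟨t, m, n, p⟩
      have : cw (i, j, false) (t + p, m, n, 0) = cw (i, j, true) (t, m, n, p) := by
        simp [cw_apply]; ring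
      simp only [Function.comp, this]
      cases i <;> cases j <;> rfl
    · refine Tendsto.congr (fun s => ?_) (by simpa [z] using hw i j)
      rcases s with ⟨t, m, n, p⟩
      have : cw (i, j, true) (t + p, m, n, 0) = cw (i, j, true) (t, m, n, p) := by
        simp [cw_apply]; ring
      simp only [Function.comp, this]
      cases i <;> cases j <;> rfl
  rw [QQ_iff hd ht a] at h2 ⊢
  exact OC_trans (OC_trans h2 hz2) (OC_symm hd hz1)

/-- Reflection in the third direction. -/
theorem QQ_refl3 {a b c d e f g h : X} (hz : QQ T (mkC a b c d e f g h)) :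
    QQ T (mkC e f g h a b c d) := by
  have := QQ_reindex (fun i => (i.1, i.2.1, !i.2.2))
    (fun s => (s.1 + s.2.2.2, s.2.1, s.2.2.1, - s.2.2.2)) ?_ hz
  · convert this using 1
    ext ⟨i, j, k⟩
    cases i <;> cases j <;> cases k <;> rfl
  · rintro ⟨i, j, k⟩ ⟨t, m, n, p⟩
    cases k <;> simp [cw_apply] <;> ring

/-- Exchange of the first and third directions. -/
theorem QQ_swap13 {a b c d e f g h : X} (hz : QQ T (mkC a b c d e f g h)) :
    QQ T (mkC a e c g b f d h) := by
  have := QQ_reindex (fun i => (i.2.2, i.2.1, i.1))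
    (fun s => (s.1, s.2.2.2, s.2.2.1, s.2.1)) ?_ hz
  · convert this using 1
    ext ⟨i, j, k⟩
    cases i <;> cases j <;> cases k <;> rfl
  · rintro ⟨i, j, k⟩ ⟨t, m, n, p⟩
    simp [cw_apply]; ring

/-- Exchange of the second and third directions. -/
theorem QQ_swap23 {a b c d e f g h : X} (hz : QQ T (mkC a b c d e f g h)) :
    QQ T (mkC a b e f c d g h) := by
  have := QQ_reindex (fun i => (i.1, i.2.2, i.2.1))
    (fun s => (s.1, s.2.1, s.2.2.2, s.2.2.1)) ?_ hz
  · convert this using 1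
    ext ⟨i, j, k⟩
    cases i <;> cases j <;> cases k <;> rfl
  · rintro ⟨i, j, k⟩ ⟨t, m, n, p⟩
    simp [cw_apply]; ring

/-- Duplication of a face in the third direction. -/
theorem QQ_dup {a b c d e f g h : X} (hz : QQ T (mkC a b c d e f g h)) :
    QQ T (mkC a b c d a b c d) := by
  have := QQ_reindex (fun i => (i.1, i.2.1, false))
    (fun s => (s.1, s.2.1, s.2.2.1, 0)) ?_ hz
  · convert this using 1
    ext ⟨i, j, k⟩
    cases i <;> cases j <;> cases k <;> rfl
  · rintro ⟨i, j, k⟩ ⟨t, m, n, p⟩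
    simp [cw_apply]

theorem QQ_edge (hd : IsDistal T) (ht : IsTransitive T) (a b : X) :
    QQ T (mkC a a a a b b b b) := by
  refine ⟨a, ?_⟩
  refine map_mem_closure (f := fun (y : X) => mkC a a a a y y y y) ?_ (dense_orbit hd ht a b) ?_
  · refine continuous_pi ?_
    rintro ⟨i, j, k⟩
    cases i <;> cases j <;> cases k <;> simp only [mkC] <;> fun_prop
  · rintro _ ⟨n, rfl⟩
    refine ⟨(0, 0, 0, n), ?_⟩
    ext ⟨i, j, k⟩
    cases i <;> cases j <;> cases k <;> simp [mkC, actA, cw_apply, iterZ_zero]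

theorem QQ_reduce (hd : IsDistal T) (ht : IsTransitive T) {x y a b c : X}
    (h : QQ T (mkC x a b c y a b c)) : QQ T (mkC x y y y y y y y) := by
  -- glue in direction 1
  have s1 : QQ T (mkC x y b b a a c c) := QQ_swap13 h
  have s2 : QQ T (mkC y a b c y a b c) := QQ_dup (QQ_refl3 h)
  have s3 : QQ T (mkC a a c c y y b b) := QQ_refl3 (QQ_swap13 s2)
  have s4 : QQ T (mkC x y b b y y b b) := QQ_glue hd ht s1 s3
  -- glue in direction 2
  have s5 : QQ T (mkC x y y y b b b b) := QQ_swap23 s4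
  exact QQ_glue hd ht s5 (QQ_edge hd ht b y)

theorem QQ_closed (hd : IsDistal T) (ht : IsTransitive T) :
    IsClosed {z | QQ T z} := by
  obtain ⟨x, -⟩ := id ht
  have : {z | QQ T z} = {z | OC T cw (fun _ => x) z} := by
    ext z; exact QQ_iff hd ht x z
  rw [this]
  exact isClosed_closure

theorem RP2_QQ (hd : IsDistal T) (ht : IsTransitive T) {x y : X} (h : RP2 T x y) :
    QQ T (mkC x y y y y y y y) := by
  have step : ∀ ε > 0, ∃ z, QQ T z ∧ dist (z (false, false, false)) x < ε ∧
      dist (z (false, false, true)) y < ε ∧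
      ∀ i j, (i, j) ≠ (false, false) → dist (z (i, j, false)) (z (i, j, true)) < ε := by
    intro ε hε
    obtain ⟨x', y', m, n, h1, h2, h3, h4, h5⟩ := h ε hε
    have hopen : IsOpen {w : X | dist w y < ε ∧ dist (iterZ T m x') (iterZ T m w) < ε ∧
        dist (iterZ T n x') (iterZ T n w) < ε ∧
        dist (iterZ T (m + n) x') (iterZ T (m + n) w) < ε} := by
      have hc := iterZ_cont T
      refine ((isOpen_lt (continuous_id.dist continuous_const) continuous_const).inter
        ((isOpen_lt (continuous_const.dist (hc m)) continuous_const).inter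
        ((isOpen_lt (continuous_const.dist (hc n)) continuous_const).inter
        (isOpen_lt (continuous_const.dist (hc (m + n))) continuous_const))))
    obtain ⟨_, ⟨hp1, hp2, hp3, hp4⟩, ⟨p, rfl⟩⟩ :=
      mem_closure_iff.1 (dense_orbit hd ht x' y') _ hopen ⟨h2, h3, h4, h5⟩
    refine ⟨actA T cw (0, m, n, p) (fun _ => x'), ⟨x', subset_closure ⟨_, rfl⟩⟩, ?_, ?_, ?_⟩
    · simpa [actA, cw_apply, iterZ_zero] using h1
    · simpa [actA, cw_apply] using hp1
    · simp only [← iterZ_add] at hp2 hp3 hp4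
      intro i j hij
      cases i <;> cases j
      · simp at hij
      · simpa [actA, cw_apply] using hp3
      · simpa [actA, cw_apply] using hp2
      · simpa [actA, cw_apply] using hp4
  choose z hz1 hz2 hz3 hz4 using fun n : ℕ => step (1 / ((n : ℝ) + 1)) (by positivity)
  let U : Ultrafilter ℕ := hyperfilter ℕ
  obtain ⟨w, -, hw⟩ := isCompact_univ.ultrafilter_le_nhds (U.map z) (by simp)
  have hw : Tendsto z U (𝓝 w) := hw
  have hwc : ∀ i, Tendsto (fun n => z n i) U (𝓝 (w i)) := tendsto_pi_nhds.1 hw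
  have hU : (U : Filter ℕ) ≤ atTop := Nat.hyperfilter_le_atTop
  have hlim : Tendsto (fun n : ℕ => 1 / ((n : ℝ) + 1)) U (𝓝 0) :=
    tendsto_one_div_add_atTop_nhds_zero_nat.mono_left hU
  have hQ : QQ T w := (QQ_closed hd ht).mem_of_tendsto hw (Eventually.of_forall hz1)
  have e1 : w (false, false, false) = x := by
    refine dist_le_zero.1 ?_
    exact le_of_tendsto_of_tendsto' ((hwc _).dist tendsto_const_nhds) hlim fun n => (hz2 n).le
  have e2 : w (false, false, true) = y := by
    refine dist_le_zero.1 ?_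
    exact le_of_tendsto_of_tendsto' ((hwc _).dist tendsto_const_nhds) hlim fun n => (hz3 n).le
  have e3 : ∀ i j, (i, j) ≠ (false, false) → w (i, j, true) = w (i, j, false) := by
    intro i j hij
    symm
    refine dist_le_zero.1 ?_
    exact le_of_tendsto_of_tendsto' ((hwc _).dist (hwc _)) hlim fun n => (hz4 n i j hij).le
  have : w = mkC x (w (true, false, false)) (w (false, true, false)) (w (true, true, false))
      y (w (true, false, false)) (w (false, true, false)) (w (true, true, false)) := by
    ext ⟨i, j, k⟩
    cases i <;> cases j <;> cases k <;> simp [mkC, e1, e2, e3]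
  rw [this] at hQ
  exact QQ_reduce hd ht hQ

theorem QQ_near {z : Bool × Bool × Bool → X} (h : QQ T z) : ∀ ε > 0, ∃ x' y' : X, ∃ m n : ℤ,
    dist x' (z (false, false, false)) < ε ∧ dist y' (z (false, false, true)) < ε ∧
    dist (iterZ T m x') (z (true, false, false)) < ε ∧
    dist (iterZ T n x') (z (false, true, false)) < ε ∧
    dist (iterZ T (m + n) x') (z (true, true, false)) < ε ∧
    dist (iterZ T m y') (z (true, false, true)) < ε ∧
    dist (iterZ T n y') (z (false, true, true)) < ε ∧
    dist (iterZ T (m + n) y') (z (true, true, true)) < ε := by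
  intro ε hε
  obtain ⟨x, hx⟩ := h
  obtain ⟨⟨t, m, n, p⟩, hg⟩ := Metric.mem_closure_range_iff.1 hx ε hε
  rw [dist_pi_lt_iff hε] at hg
  have key : ∀ i, dist (actA T cw (t, m, n, p) (fun _ => x) i) (z i) < ε := by
    intro i; rw [dist_comm]; exact hg i
  refine ⟨iterZ T t x, iterZ T (t + p) x, m, n, ?_, ?_, ?_, ?_, ?_, ?_, ?_, ?_⟩
  · simpa [actA, cw_apply] using key (false, false, false)
  · simpa [actA, cw_apply] using key (false, false, true)
  · have e : m + t = cw (true, false, false) (t, m, n, p) := by simp [cw_apply]; ring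
    rw [← iterZ_add, e]
    exact key (true, false, false)
  · have e : n + t = cw (false, true, false) (t, m, n, p) := by simp [cw_apply]; ring
    rw [← iterZ_add, e]
    exact key (false, true, false)
  · have e : m + n + t = cw (true, true, false) (t, m, n, p) := by simp [cw_apply]; ring
    rw [← iterZ_add, e]
    exact key (true, true, false)
  · have e : m + (t + p) = cw (true, false, true) (t, m, n, p) := by simp [cw_apply]; ring
    rw [← iterZ_add, e]
    exact key (true, false, true)
  · have e : n + (t + p) = cw (false, true, true) (t, m, n, p) := by simp [cw_apply]; ring
    rw [← iterZ_add, e]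
    exact key (false, true, true)
  · have e : m + n + (t + p) = cw (true, true, true) (t, m, n, p) := by simp [cw_apply]; ring
    rw [← iterZ_add, e]
    exact key (true, true, true)

theorem QQ_RP2S {x y : X} (h : QQ T (mkC x y y y y y y y)) : RP2S T x y := QQ_near h

theorem QQ_RP2 {x y a b c : X} (h : QQ T (mkC x a b c y a b c)) : RP2 T x y := by
  intro ε hε
  obtain ⟨x', y', m, n, h1, h2, h3, h4, h5, h6, h7, h8⟩ := QQ_near h (ε / 2) (by linarith)
  simp only [mkC] at h1 h2 h3 h4 h5 h6 h7 h8
  exact ⟨x', y', m, n, by linarith, by linarith,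
    (dist_triangle_right _ _ _).trans_lt (by linarith),
    (dist_triangle_right _ _ _).trans_lt (by linarith),
    (dist_triangle_right _ _ _).trans_lt (by linarith)⟩

theorem RP2S_RP2 {x y : X} (h : RP2S T x y) : RP2 T x y := by
  intro ε hε
  obtain ⟨x', y', m, n, h1, h2, h3, h4, h5, h6, h7, h8⟩ := h (ε / 2) (by linarith)
  exact ⟨x', y', m, n, by linarith, by linarith,
    (dist_triangle_right _ _ _).trans_lt (by linarith),
    (dist_triangle_right _ _ _).trans_lt (by linarith),
    (dist_triangle_right _ _ _).trans_lt (by linarith)⟩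

theorem RP2_symm {x y : X} (h : RP2 T x y) : RP2 T y x := by
  intro ε hε
  obtain ⟨x', y', m, n, h1, h2, h3, h4, h5⟩ := h ε hε
  exact ⟨y', x', m, n, h2, h1, by rwa [dist_comm], by rwa [dist_comm], by rwa [dist_comm]⟩

end Aux

/-- For a distal transitive system, `RP²` is a closed equivalence relation and
coincides with `RP²ₛ`. -/
theorem stmt1 {X : Type*} [MetricSpace X] [CompactSpace X] [Nonempty X]
    (T : X ≃ₜ X) (hdistal : IsDistal T) (htrans : IsTransitive T) :
    IsClosed {p : X × X | RP2 T p.1 p.2} ∧ Equivalence (RP2 T) ∧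
      (∀ x y : X, RP2 T x y ↔ RP2S T x y) := by
  refine ⟨?_, ⟨?_, RP2_symm, ?_⟩, fun x y => ⟨fun h => QQ_RP2S (RP2_QQ hdistal htrans h), RP2S_RP2⟩⟩
  · have : {p : X × X | RP2 T p.1 p.2} =
        (fun p : X × X => mkC p.1 p.2 p.2 p.2 p.2 p.2 p.2 p.2) ⁻¹' {z | QQ T z} := by
      ext p
      exact ⟨RP2_QQ hdistal htrans, QQ_RP2⟩
    rw [this]
    refine (QQ_closed hdistal htrans).preimage (continuous_pi ?_)
    rintro ⟨i, j, k⟩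
    cases i <;> cases j <;> cases k <;> simp only [mkC] <;> fun_prop
  · intro x ε hε
    exact ⟨x, x, 0, 0, by simpa, by simpa, by simpa, by simpa, by simpa⟩
  · intro x y z hxy hyz
    have h1 := RP2_QQ hdistal htrans hxy
    have h2 := QQ_refl3 (RP2_QQ hdistal htrans (RP2_symm hyz))
    exact QQ_RP2 (QQ_glue hdistal htrans h1 h2)
end

section
/- Let (X,T) be a distal minimal topological dynamical system, let x0 ∈ X, and let K be the closure in X⁶ of the set {(T^m x0, T^n x0, T^{m+n} x0, T^p x0, T^{p+m} x0, T^{p+n} x0) : m,n,p ∈ ℤ}. Suppose (x1,x2,x3,x4,x5,x6) ∈ K and x'_6 ∈ X is such that (x6,x'_6) ∈ RP. Then (x1,x2,x3,x4,x5,x'_6) ∈ K. -/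
open Filter Topology

namespace Aux15

variable {X : Type*} [MetricSpace X] [CompactSpace X]

theorem iterZ_cont (T : X ≃ₜ X) (n : ℤ) : Continuous (iterZ T n) := by
  have key : ∀ n : ℕ, Continuous (iterZ T (n : ℤ)) ∧ Continuous (iterZ T (-(n : ℤ))) := by
    intro n
    induction n with
    | zero => exact ⟨continuous_id, continuous_id⟩
    | succ k ih =>
      constructor
      · have : iterZ T ((k + 1 : ℕ) : ℤ) = iterZ T (k : ℤ) ∘ T := by
          funext x
          simp only [iterZ, Nat.cast_add, Nat.cast_one, zpow_add, zpow_one]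
          rfl
        rw [this]
        exact ih.1.comp T.continuous
      · have : iterZ T (-((k + 1 : ℕ) : ℤ)) = iterZ T (-(k : ℤ)) ∘ T.symm := by
          funext x
          simp only [iterZ, Nat.cast_add, Nat.cast_one, neg_add, zpow_add]
          rw [zpow_neg_one]
          rfl
        rw [this]
        exact ih.2.comp T.symm.continuous
  rcases Int.eq_nat_or_neg n with ⟨k, rfl | rfl⟩
  · exact (key k).1
  · exact (key k).2

theorem iterZ_add (T : X ≃ₜ X) (m n : ℤ) (x : X) :
    iterZ T (m + n) x = iterZ T m (iterZ T n x) := by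
  simp only [iterZ, zpow_add]; rfl

theorem iterZ_zero (T : X ≃ₜ X) (x : X) : iterZ T 0 x = x := by
  simp [iterZ]

section ell

variable {ι : Type*} (T : X ≃ₜ X) (L : AddSubgroup (ι → ℤ))

/-- Enveloping semigroup of the action of `L` on `ι → X`. -/
def gen : Set (ι → X → X) := {f | ∃ l ∈ L, f = fun i => iterZ T (l i)}

def ell : Set (ι → X → X) := closure (gen T L)

theorem ell_id : (fun _ x => x) ∈ ell T L :=
  subset_closure ⟨0, L.zero_mem, by funext i x; exact (iterZ_zero T x).symm⟩

theorem ell_comp {p q : ι → X → X} (hp : p ∈ ell T L) (hq : q ∈ ell T L) :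
    (fun i x => p i (q i x)) ∈ ell T L := by
  have h1 : ∀ a ∈ gen T L, (fun i x => a i (q i x)) ∈ ell T L := by
    rintro a ⟨l, hl, rfl⟩
    refine map_mem_closure (f := fun (r : ι → X → X) => fun i x => iterZ T (l i) (r i x)) ?_ hq ?_
    · refine continuous_pi fun i => continuous_pi fun x => (iterZ_cont T (l i)).comp ?_
      fun_prop
    · rintro r ⟨l', hl', rfl⟩
      exact ⟨l + l', L.add_mem hl hl', by funext i x; exact (iterZ_add T _ _ x).symm⟩
  have := map_mem_closure (f := fun (r : ι → X → X) => fun i x => r i (q i x)) (t := ell T L)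
    (by fun_prop) hp h1
  rwa [ell, closure_closure] at this

variable {T}

theorem ell_idem (hd : IsDistal T) {u : ι → X → X} (hu : u ∈ ell T L)
    (h : ∀ i x, u i (u i x) = u i x) (i : ι) (x : X) : u i x = x := by
  by_contra hne
  have hpos := hd x (u i x) (Ne.symm hne)
  set c := ⨅ n : ℤ, dist (iterZ T n x) (iterZ T n (u i x)) with hc
  have hcont : Continuous fun f : ι → X → X => dist (f i x) (f i (u i x)) := by fun_prop
  have hcl : IsClosed {f : ι → X → X | c ≤ dist (f i x) (f i (u i x))} :=
    isClosed_le continuous_const hcont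
  have hsub : gen T L ⊆ {f : ι → X → X | c ≤ dist (f i x) (f i (u i x))} := by
    rintro f ⟨l, hl, rfl⟩
    have hb : BddBelow (Set.range fun n : ℤ => dist (iterZ T n x) (iterZ T n (u i x))) :=
      ⟨0, by rintro _ ⟨n, rfl⟩; exact dist_nonneg⟩
    exact ciInf_le hb (l i)
  have := closure_minimal hsub hcl hu
  simp only [Set.mem_ofPred_eq, h, dist_self] at this
  linarith

theorem ell_linv (hd : IsDistal T) {p : ι → X → X} (hp : p ∈ ell T L) :
    ∃ q ∈ ell T L, ∀ i x, q i (p i x) = x := by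
  letI : Semigroup (ι → X → X) :=
    { mul := fun a b => fun i x => a i (b i x)
      mul_assoc := fun a b c => rfl }
  have hc : ∀ r : ι → X → X, Continuous (fun a : ι → X → X => a * r) := by
    intro r
    change Continuous (fun a : ι → X → X => fun i x => a i (r i x))
    fun_prop
  have hcomp : IsCompact (ell T L) := isClosed_closure.isCompact
  obtain ⟨u, ⟨q, hq, rfl⟩, hu⟩ := exists_idempotent_in_compact_subsemigroup hc
    ((fun a : ι → X → X => a * p) '' ell T L) ⟨_, _, hp, rfl⟩ (hcomp.image (hc p)) (by
      rintro _ ⟨a, ha, rfl⟩ _ ⟨b, hb, rfl⟩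
      exact ⟨a * p * b, ell_comp T L (p := a * p) (q := b) (ell_comp T L (p := a) (q := p) ha hp) hb,
        rfl⟩)
  exact ⟨q, hq, ell_idem L hd (ell_comp T L hq hp) fun i x => congrFun (congrFun hu i) x⟩

theorem ell_inv (hd : IsDistal T) {p : ι → X → X} (hp : p ∈ ell T L) :
    ∃ q ∈ ell T L, (∀ i x, q i (p i x) = x) ∧ ∀ i x, p i (q i x) = x := by
  obtain ⟨q, hq, h⟩ := ell_linv L hd hp
  obtain ⟨r, hr, h'⟩ := ell_linv L hd hq
  refine ⟨q, hq, h, fun i x => ?_⟩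
  have : r i (q i (p i (q i x))) = r i (q i x) := by rw [h]
  rwa [h', h'] at this

/-- The enveloping group. -/
def EG (hd : IsDistal T) : Subgroup (ι → Equiv.Perm X) where
  carrier := {s | (fun i x => s i x) ∈ ell T L}
  one_mem' := ell_id T L
  mul_mem' := fun {a b} ha hb =>
    ell_comp T L (p := fun i x => a i x) (q := fun i x => b i x) ha hb
  inv_mem' := by
    intro s hs
    obtain ⟨q, hq, h1, h2⟩ := ell_inv L hd hs
    have : (fun i x => (s⁻¹) i x) = q := by
      funext i x
      simp only [Pi.inv_apply]
      rw [Equiv.Perm.inv_eq_iff_eq]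
      exact (h2 i x).symm
    change (fun i x => (s⁻¹) i x) ∈ ell T L
    rwa [this]

theorem mem_EG (hd : IsDistal T) (s : ι → Equiv.Perm X) :
    s ∈ EG L hd ↔ (fun i x => s i x) ∈ ell T L := Iff.rfl

theorem orbit (hd : IsDistal T) (z w : ι → X) :
    w ∈ closure {v : ι → X | ∃ l ∈ L, v = fun i => iterZ T (l i) (z i)} ↔
      ∃ s ∈ EG L hd, ∀ i, s i (z i) = w i := by
  have hev : Continuous (fun f : ι → X → X => fun i => f i (z i)) := by fun_prop
  constructor
  · intro hw
    have hcomp : IsCompact (ell T L) := isClosed_closure.isCompact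
    have hsub : {v : ι → X | ∃ l ∈ L, v = fun i => iterZ T (l i) (z i)} ⊆
        (fun f : ι → X → X => fun i => f i (z i)) '' ell T L := by
      rintro v ⟨l, hl, rfl⟩
      exact ⟨_, subset_closure ⟨l, hl, rfl⟩, rfl⟩
    obtain ⟨p, hp, rfl⟩ := closure_minimal hsub (hcomp.image hev).isClosed hw
    obtain ⟨q, hq, h1, h2⟩ := ell_inv L hd hp
    exact ⟨fun i => ⟨p i, q i, h1 i, h2 i⟩, hp, fun i => rfl⟩
  · rintro ⟨s, hs, h⟩
    have : w = (fun f : ι → X → X => fun i => f i (z i)) (fun i x => s i x) := by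
      funext i; exact (h i).symm
    rw [this]
    refine map_mem_closure hev hs ?_
    rintro f ⟨l, hl, rfl⟩
    exact ⟨l, hl, rfl⟩

theorem transport {κ : Type*} (L' : AddSubgroup (κ → ℤ)) (hd : IsDistal T) (σ : κ → Option ι)
    (hσ : ∀ l ∈ L, (fun k => (σ k).elim 0 l) ∈ L') {s : ι → Equiv.Perm X} (hs : s ∈ EG L hd) :
    (fun k => (σ k).elim 1 s) ∈ EG L' hd := by
  have hc : Continuous (fun f : ι → X → X => fun k => (σ k).elim id f) := by
    refine continuous_pi fun k => ?_
    cases σ k with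
    | none => exact continuous_const
    | some i => exact continuous_apply i
  have := map_mem_closure (t := gen T L') hc hs (by
    rintro f ⟨l, hl, rfl⟩
    refine ⟨_, hσ l hl, ?_⟩
    funext k x
    cases h : σ k with
    | none => simp [h, iterZ_zero]
    | some i => simp [h])
  have heq : (fun k x => ((σ k).elim 1 s : Equiv.Perm X) x) =
      fun k => (σ k).elim id (fun i x => s i x) := by
    funext k x
    cases h : σ k <;> simp
  rw [mem_EG, heq]
  exact this

end ell

def L3 : AddSubgroup (Fin 3 → ℤ) where
  carrier := {l | l 2 = l 0 + l 1}
  zero_mem' := by simp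
  add_mem' := by intro a b ha hb; simp only [Set.mem_ofPred_eq, Pi.add_apply] at *; lia
  neg_mem' := by intro a ha; simp only [Set.mem_ofPred_eq, Pi.neg_apply] at *; lia

def L4 : AddSubgroup (Fin 4 → ℤ) where
  carrier := {l | l 0 + l 3 = l 1 + l 2}
  zero_mem' := by simp
  add_mem' := by intro a b ha hb; simp only [Set.mem_ofPred_eq, Pi.add_apply] at *; lia
  neg_mem' := by intro a ha; simp only [Set.mem_ofPred_eq, Pi.neg_apply] at *; lia

def L6 : AddSubgroup (Fin 6 → ℤ) where
  carrier := {l | l 2 = l 0 + l 1 ∧ l 4 = l 3 + l 0 ∧ l 5 = l 3 + l 1}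
  zero_mem' := by simp
  add_mem' := by intro a b ha hb; simp only [Set.mem_ofPred_eq, Pi.add_apply] at *; lia
  neg_mem' := by intro a ha; simp only [Set.mem_ofPred_eq, Pi.neg_apply] at *; lia

theorem mem_L3 (l : Fin 3 → ℤ) : l ∈ L3 ↔ l 2 = l 0 + l 1 := Iff.rfl
theorem mem_L4 (l : Fin 4 → ℤ) : l ∈ L4 ↔ l 0 + l 3 = l 1 + l 2 := Iff.rfl
theorem mem_L6 (l : Fin 6 → ℤ) : l ∈ L6 ↔ l 2 = l 0 + l 1 ∧ l 4 = l 3 + l 0 ∧ l 5 = l 3 + l 1 :=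
  Iff.rfl

variable {T : X ≃ₜ X} (hd : IsDistal T)

/-- The enveloping group of `(X,T)`. -/
def E1 (u : Equiv.Perm X) : Prop := (fun _ : Unit => u) ∈ EG (⊤ : AddSubgroup (Unit → ℤ)) hd

theorem E1.mul {u v : Equiv.Perm X} (hu : E1 hd u) (hv : E1 hd v) : E1 hd (u * v) :=
  (EG _ hd).mul_mem hu hv

theorem E1.inv {u : Equiv.Perm X} (hu : E1 hd u) : E1 hd u⁻¹ :=
  (EG _ hd).inv_mem hu

theorem E1_of {ι : Type*} {L : AddSubgroup (ι → ℤ)} {s : ι → Equiv.Perm X} (hs : s ∈ EG L hd)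
    (i : ι) : E1 hd (s i) :=
  transport L ⊤ hd (fun _ : Unit => some i) (fun _ _ => trivial) hs

theorem E1_zpow (n : ℤ) : ∃ u : Equiv.Perm X, E1 hd u ∧ ∀ x, u x = iterZ T n x :=
  ⟨T.toEquiv ^ n, subset_closure ⟨fun _ => n, trivial, rfl⟩, fun _ => rfl⟩

theorem E1_trans (hmin : IsMinimal T) (x y : X) : ∃ u : Equiv.Perm X, E1 hd u ∧ u x = y := by
  have h : (fun _ : Unit => y) ∈ closure {v : Unit → X | ∃ l ∈ (⊤ : AddSubgroup (Unit → ℤ)),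
      v = fun i => iterZ T (l i) x} := by
    refine map_mem_closure (f := fun (a : X) => fun _ : Unit => a) (by fun_prop) (hmin x y) ?_
    rintro _ ⟨n, rfl⟩
    exact ⟨fun _ => n, trivial, rfl⟩
  obtain ⟨s, hs, h⟩ := (orbit _ hd (fun _ => x) _).1 h
  exact ⟨s (), hs, h ()⟩

theorem vec_mem {κ : Type*} {L' : AddSubgroup (κ → ℤ)} (σ : κ → Bool)
    (hσ : ∀ n : ℤ, (fun k => if σ k then n else 0) ∈ L') {u : Equiv.Perm X} (hu : E1 hd u) :
    (fun k => if σ k then u else 1) ∈ EG L' hd := by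
  have := transport ⊤ L' hd (fun k => if σ k then some () else none) (by
    intro l _
    convert hσ (l ()) using 2 with k
    cases σ k <;> rfl) hu
  convert this using 2 with k
  cases σ k <;> rfl

theorem v3 {u v : Equiv.Perm X} (hu : E1 hd u) (hv : E1 hd v) :
    ![u, v, u * v] ∈ EG L3 hd := by
  have h1 := vec_mem hd (L' := L3) ![true, false, true] (by intro n; simp [mem_L3]) hu
  have h2 := vec_mem hd (L' := L3) ![false, true, true] (by intro n; simp [mem_L3]) hv
  convert (EG L3 hd).mul_mem h1 h2 using 1
  funext k
  fin_cases k <;> simp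

theorem v4 {u v w : Equiv.Perm X} (hu : E1 hd u) (hv : E1 hd v) (hw : E1 hd w) :
    ![u, v, w * u, w * v] ∈ EG L4 hd := by
  have h1 := vec_mem hd (L' := L4) ![true, false, true, false] (by intro n; simp [mem_L4]) hu
  have h2 := vec_mem hd (L' := L4) ![false, true, false, true] (by intro n; simp [mem_L4]) hv
  have h3 := vec_mem hd (L' := L4) ![false, false, true, true] (by intro n; simp [mem_L4]) hw
  convert (EG L4 hd).mul_mem h3 ((EG L4 hd).mul_mem h1 h2) using 1
  funext k
  fin_cases k <;> simp

theorem E1_one : E1 hd 1 := (EG _ hd).one_mem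

/-- Conjugation invariance of the face group. -/
theorem conj3 {f : Fin 3 → Equiv.Perm X} (hf : f ∈ EG L3 hd) {g : Equiv.Perm X} (hg : E1 hd g) :
    (fun i => g * f i * g⁻¹) ∈ EG L3 hd := by
  have ha := E1_of hd hf 0
  have hb := E1_of hd hf 1
  have hc3 := E1_of hd hf 2
  set a := f 0 with ha0
  set b := f 1 with hb0
  set c := b⁻¹ * a⁻¹ * f 2 with hc0
  have hc : E1 hd c := (hb.inv.mul hd ha.inv).mul hd hc3
  have one := E1_one hd
  have k1 : ![1, 1, c] ∈ EG L3 hd := by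
    convert (EG L3 hd).mul_mem (v3 hd one hb.inv)
      ((EG L3 hd).mul_mem (v3 hd ha.inv one) hf) using 1
    funext k
    fin_cases k <;> simp [c, a, b, mul_assoc]
  have k2 : ![1, 1, g * c * g⁻¹] ∈ EG L3 hd := by
    convert (EG L3 hd).mul_mem ((EG L3 hd).mul_mem ((EG L3 hd).mul_mem (v3 hd hg one)
      (v3 hd one hc)) ((EG L3 hd).mul_mem (v3 hd hg.inv one) (v3 hd one hc.inv))) k1 using 1
    funext k
    fin_cases k <;> simp [mul_assoc]
  convert (EG L3 hd).mul_mem (v3 hd ((hg.mul hd ha).mul hd hg.inv) ((hg.mul hd hb).mul hd hg.inv))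
    k2 using 1
  funext k
  fin_cases k <;> simp [c, a, b, mul_assoc]

/-- Parallelogram form of regional proximality. -/
def P (x y : X) : Prop :=
  ∃ s ∈ EG L4 hd, s 0 x = x ∧ s 1 x = y ∧ s 2 x = x ∧ s 3 x = x

theorem P_map {x y : X} (h : P hd x y) {u : Equiv.Perm X} (hu : E1 hd u) : P hd (u x) (u y) := by
  obtain ⟨s, hs, h0, h1, h2, h3⟩ := h
  have k : (fun _ : Fin 4 => u) ∈ EG L4 hd := by
    convert v4 hd hu hu (E1_one hd) using 1
    funext k
    fin_cases k <;> simp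
  refine ⟨_, (EG L4 hd).mul_mem k ((EG L4 hd).mul_mem hs ((EG L4 hd).inv_mem k)), ?_, ?_, ?_, ?_⟩ <;>
    simp [*]

theorem P_of_RP (hmin : IsMinimal T) {x y : X} (h : RP T x y) : P hd x y := by
  set C := closure {v : Fin 4 → X | ∃ l ∈ L4, v = fun i => iterZ T (l i) x} with hC
  have hmem : ∀ (x' y' : X) (n : ℤ), ![x', y', iterZ T n x', iterZ T n y'] ∈ C := by
    intro x' y' n
    obtain ⟨u, hu, hux⟩ := E1_trans hd hmin x x'
    obtain ⟨v, hv, hvx⟩ := E1_trans hd hmin x y'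
    obtain ⟨w, hw, hwx⟩ := E1_zpow hd n
    refine (orbit L4 hd (fun _ => x) _).2 ⟨_, v4 hd hu hv hw, ?_⟩
    intro i
    fin_cases i <;> simp [*]
  have h' : ∀ k : ℕ, ∃ x' y' : X, ∃ n : ℤ, dist x' x < 1 / ((k : ℝ) + 1) ∧
      dist y' y < 1 / ((k : ℝ) + 1) ∧ dist (iterZ T n x') (iterZ T n y') < 1 / ((k : ℝ) + 1) :=
    fun k => h _ Nat.one_div_pos_of_nat
  choose xs ys ns hx hy hn using h'
  obtain ⟨z, φ, hφ, hz⟩ := CompactSpace.tendsto_subseq (fun k => iterZ T (ns k) (xs k))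
  have t0 : Tendsto (fun k : ℕ => 1 / ((k : ℝ) + 1)) atTop (𝓝 0) :=
    tendsto_one_div_add_atTop_nhds_zero_nat
  have tx : Tendsto xs atTop (𝓝 x) := tendsto_iff_dist_tendsto_zero.2
    (squeeze_zero (fun _ => dist_nonneg) (fun k => (hx k).le) t0)
  have ty : Tendsto ys atTop (𝓝 y) := tendsto_iff_dist_tendsto_zero.2
    (squeeze_zero (fun _ => dist_nonneg) (fun k => (hy k).le) t0)
  have tn : Tendsto (fun k => dist (iterZ T (ns k) (xs k)) (iterZ T (ns k) (ys k))) atTop (𝓝 0) :=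
    squeeze_zero (fun _ => dist_nonneg) (fun k => (hn k).le) t0
  have tz : Tendsto (fun k => iterZ T (ns (φ k)) (ys (φ k))) atTop (𝓝 z) :=
    hz.congr_dist (tn.comp hφ.tendsto_atTop)
  have hlim : ![x, y, z, z] ∈ C := by
    refine isClosed_closure.mem_of_tendsto (b := atTop) (f := fun k : ℕ =>
      ![xs (φ k), ys (φ k), iterZ T (ns (φ k)) (xs (φ k)), iterZ T (ns (φ k)) (ys (φ k))]) ?_
      (Eventually.of_forall fun k => hmem _ _ _)
    rw [tendsto_pi_nhds]
    intro i
    fin_cases i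
    · exact tx.comp hφ.tendsto_atTop
    · exact ty.comp hφ.tendsto_atTop
    · exact hz
    · exact tz
  obtain ⟨s, hs, hsx⟩ := (orbit L4 hd (fun _ => x) _).1 hlim
  obtain ⟨k, hk, hkz⟩ := E1_trans hd hmin z x
  have e0 := hsx 0
  have e1 := hsx 1
  have e2 := hsx 2
  have e3 := hsx 3
  simp at e0 e1 e2 e3
  refine ⟨_, (EG L4 hd).mul_mem (v4 hd (E1_one hd) (E1_one hd) hk) hs, ?_, ?_, ?_, ?_⟩ <;>
    simp [*]

theorem generic [Nonempty X] : ∃ x : X, ∀ y, P hd x y →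
    ∃ f ∈ EG L3 hd, f 0 x = x ∧ f 1 x = x ∧ f 2 x = y := by
  let O : Set (Fin 3 → X) → Set X := fun U => {x' | ∃ l ∈ L3, (fun i => iterZ T (l i) x') ∈ U}
  let B := TopologicalSpace.countableBasis (Fin 3 → X)
  have hO : ∀ U ∈ B, IsOpen (O U) := by
    intro U hU
    have : O U = ⋃ l ∈ L3, (fun x' : X => fun i => iterZ T (l i) x') ⁻¹' U := by
      ext x'; simp [O]
    rw [this]
    refine isOpen_biUnion fun l _ => (TopologicalSpace.isOpen_of_mem_countableBasis hU).preimage ?_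
    exact continuous_pi fun i => iterZ_cont T (l i)
  have hdense : Dense (⋂ U ∈ B, (O U ∪ (closure (O U))ᶜ)) := by
    refine dense_biInter_of_isOpen (fun U hU => (hO U hU).union isClosed_closure.isOpen_compl)
      (TopologicalSpace.countable_countableBasis _) ?_
    intro U hU x
    by_cases hx : x ∈ closure (O U)
    · exact closure_mono Set.subset_union_left hx
    · exact subset_closure (Or.inr hx)
  obtain ⟨x, hx⟩ := hdense.nonempty
  refine ⟨x, fun y hy => ?_⟩
  obtain ⟨s, hs, h0, h1, h2, h3⟩ := hy
  have hcl : ![x, y, x, x] ∈ closure {v : Fin 4 → X | ∃ l ∈ L4, v = fun i => iterZ T (l i) x} :=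
    (orbit L4 hd (fun _ => x) _).2 ⟨s, hs, by intro i; fin_cases i <;> simp [*]⟩
  have hmem : ![x, x, y] ∈ closure {v : Fin 3 → X | ∃ l ∈ L3, v = fun i => iterZ T (l i) x} := by
    rw [(TopologicalSpace.isBasis_countableBasis (Fin 3 → X)).mem_closure_iff]
    intro U hU hxU
    have hxc : x ∈ closure (O U) := by
      rw [mem_closure_iff]
      intro V hV hxV
      have hW : IsOpen {v : Fin 4 → X | v 2 ∈ V ∧ ![v 0, v 3, v 1] ∈ U} := by
        refine (hV.preimage (continuous_apply 2)).inter
          ((TopologicalSpace.isOpen_of_mem_countableBasis hU).preimage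
            (f := fun v : Fin 4 → X => ![v 0, v 3, v 1]) ?_)
        refine continuous_pi fun i => ?_
        fin_cases i
        · exact continuous_apply 0
        · exact continuous_apply 3
        · exact continuous_apply 1
      obtain ⟨v, ⟨hv2, hvU⟩, l, hl, rfl⟩ := mem_closure_iff.1 hcl _ hW ⟨hxV, hxU⟩
      refine ⟨_, hv2, ![l 0 - l 2, l 3 - l 2, l 1 - l 2], ?_, ?_⟩
      · rw [mem_L4] at hl
        rw [mem_L3]
        simp
        lia
      · convert hvU using 1
        funext i
        fin_cases i <;> simp [← iterZ_add]
    have := Set.mem_iInter₂.1 hx U hU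
    rcases this with ⟨l, hl, h⟩ | h
    · exact ⟨_, h, l, hl, rfl⟩
    · exact absurd hxc h
  obtain ⟨f, hf, h⟩ := (orbit L3 hd (fun _ => x) _).1 hmem
  exact ⟨f, hf, h 0, h 1, h 2⟩

theorem all_points [Nonempty X] (hmin : IsMinimal T) {x y : X} (h : P hd x y) :
    ∃ f ∈ EG L3 hd, f 0 x = x ∧ f 1 x = x ∧ f 2 x = y := by
  obtain ⟨a, ha⟩ := generic hd
  obtain ⟨k, hk, rfl⟩ := E1_trans hd hmin x a
  obtain ⟨f, hf, h0, h1, h2⟩ := ha _ (P_map hd h hk)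
  refine ⟨_, conj3 hd hf hk.inv, ?_, ?_, ?_⟩ <;> simp [*]

theorem mem_K_iff (x0 : X) (w : Fin 6 → X) :
    (w 0, w 1, w 2, w 3, w 4, w 5) ∈ closure {q : X × X × X × X × X × X |
      ∃ m n p : ℤ, q = (iterZ T m x0, iterZ T n x0, iterZ T (m + n) x0,
        iterZ T p x0, iterZ T (p + m) x0, iterZ T (p + n) x0)} ↔
    ∃ s ∈ EG L6 hd, ∀ i, s i x0 = w i := by
  rw [← orbit L6 hd (fun _ => x0) w]
  constructor
  · intro h
    have hc : Continuous (fun q : X × X × X × X × X × X =>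
        (![q.1, q.2.1, q.2.2.1, q.2.2.2.1, q.2.2.2.2.1, q.2.2.2.2.2] : Fin 6 → X)) := by
      refine continuous_pi fun i => ?_
      fin_cases i <;> simp <;> fun_prop
    convert map_mem_closure hc h (t := {v : Fin 6 → X | ∃ l ∈ L6, v = fun i => iterZ T (l i) x0})
      ?_ using 1
    · funext i; fin_cases i <;> rfl
    · rintro _ ⟨m, n, p, rfl⟩
      refine ⟨![m, n, m + n, p, p + m, p + n], by simp [mem_L6], ?_⟩
      funext i; fin_cases i <;> rfl
  · intro h
    refine map_mem_closure (f := fun w : Fin 6 → X => (w 0, w 1, w 2, w 3, w 4, w 5))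
      (by fun_prop) h ?_
    rintro _ ⟨l, hl, rfl⟩
    obtain ⟨e2, e4, e5⟩ := (mem_L6 l).1 hl
    exact ⟨l 0, l 1, l 3, by simp only [e2, e4, e5]⟩

theorem main [Nonempty X] (hmin : IsMinimal T) (x0 : X) (w w' : Fin 6 → X)
    (hw : ∃ s ∈ EG L6 hd, ∀ i, s i x0 = w i) (h5 : RP T (w 5) (w' 5))
    (heq : ∀ i, i ≠ 5 → w' i = w i) : ∃ s ∈ EG L6 hd, ∀ i, s i x0 = w' i := by
  obtain ⟨s, hs, h⟩ := hw
  have hP := P_map hd (P_of_RP hd hmin h5) (E1_of hd hs 5).inv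
  rw [← h 5, show (s 5)⁻¹ ((s 5) x0) = x0 by simp] at hP
  obtain ⟨f, hf, h0, h1, h2⟩ := all_points hd hmin hP
  have hf6 := transport L3 L6 hd ![none, some 0, some 0, some 1, some 1, some 2] (by
    intro l hl
    rw [mem_L3] at hl
    simp [mem_L6]
    lia) hf
  refine ⟨_, (EG L6 hd).mul_mem hs hf6, ?_⟩
  intro i
  by_cases hi : i = 5
  · subst hi
    simp [h2]
  · rw [heq i hi, ← h i]
    fin_cases i <;> simp_all

end Aux15

/-- Stability of the set `K ⊆ X⁶` under replacing the last coordinate by a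
regionally proximal point. -/
theorem stmt15 {X : Type*} [MetricSpace X] [CompactSpace X] [Nonempty X]
    (T : X ≃ₜ X) (hdistal : IsDistal T) (hmin : IsMinimal T) (x0 : X)
    (x1 x2 x3 x4 x5 x6 x6' : X)
    (hK : (x1, x2, x3, x4, x5, x6) ∈ closure {q : X × X × X × X × X × X |
      ∃ m n p : ℤ, q = (iterZ T m x0, iterZ T n x0, iterZ T (m + n) x0,
        iterZ T p x0, iterZ T (p + m) x0, iterZ T (p + n) x0)})
    (h6 : RP T x6 x6') :
    (x1, x2, x3, x4, x5, x6') ∈ closure {q : X × X × X × X × X × X |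
      ∃ m n p : ℤ, q = (iterZ T m x0, iterZ T n x0, iterZ T (m + n) x0,
        iterZ T p x0, iterZ T (p + m) x0, iterZ T (p + n) x0)} := by
  have h := (Aux15.mem_K_iff hdistal x0 ![x1, x2, x3, x4, x5, x6]).1 hK
  exact (Aux15.mem_K_iff hdistal x0 ![x1, x2, x3, x4, x5, x6']).2
    (Aux15.main hdistal hmin x0 _ _ h h6 (by intro i hi; fin_cases i <;> simp_all))
end
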